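/- For all f, g ∈ L¹(ℝ³), ‖(1/p⁰)Q(f,f) − (1/p⁰)Q(g,g)‖ ≤ 2C(‖f‖ + ‖g‖)·‖f − g‖. -/

import Mathlib

/-!
The operator `Q` is bilinear up to integrability, and `f ⊗ f - g ⊗ g = f ⊗ d + d ⊗ g` with
`d = f - g`, so the estimate follows from the bound `4πC₁ ‖u‖ ‖v‖` for the `L¹(dp̄ dq̄ dω)` norm of
each of the integrands of `(1/p⁰) Q⁺(u,v)` and `(1/p⁰) Q⁻(u,v)` (`gainK_bound`, `lossK_bound`).
For the loss term this is Tonelli together with `p⁰, q⁰ ≥ 1`. For the gain term one needs that, for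
fixed `ω`, the measure `dp̄ dq̄ / (p⁰ q⁰)` is invariant under `(p̄, q̄) ↦ (p̄′, q̄′)`
(`collision_invariance`).

The invariance is proved without computing a Jacobian determinant. In coordinates orthonormal for
the metric with first axis `ω̂` (`exists_frame`), the collision only changes the components `s`, `t`
of `p̄`, `q̄` along `ω̂`, and the energies are `√(A² + s²)` and `√(B² + t²)` with `A`, `B` fixed.
With rapidities `s = A sinh θ`, `t = B sinh φ` the measure `ds dt / (p⁰ q⁰)` becomes `dθ dφ`. The
collision is the reflection of both rapidities in the rapidity of the centre of mass; as the latter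
is `φ` plus a function of `u = θ - φ`, the collision is `(u, φ) ↦ (-u, φ + H(u))`
(`collision_rapidity`), which visibly preserves `du dφ` (`line_invariance`).
-/

open MeasureTheory Real

noncomputable section

/-- Momentum space `ℝ³`. -/
abbrev E3 : Type := EuclideanSpace ℝ (Fin 3)

/-- The scalar product associated with the Bianchi type I metric coefficients `α = a(t)`,
`β = b(t)`: `p̄·q̄ = α²p¹q¹ + β²(p²q² + p³q³)`. -/
def mdot (α β : ℝ) (p q : E3) : ℝ :=
  α ^ 2 * p 0 * q 0 + β ^ 2 * (p 1 * q 1 + p 2 * q 2)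

/-- `p⁰ = √(1 + |p̄|²)` where `|p̄|² = p̄·p̄`. -/
def pZ (α β : ℝ) (p : E3) : ℝ := Real.sqrt (1 + mdot α β p p)

/-- `ω` normalized to unit length for the metric norm. -/
def omHat (α β : ℝ) (ω : E3) : E3 := (Real.sqrt (mdot α β ω ω))⁻¹ • ω

/-- The total energy `e = p⁰ + q⁰`. -/
def collE (α β : ℝ) (p q : E3) : ℝ := pZ α β p + pZ α β q

/-- The function `C(p̄, q̄, ω)` of Glassey's representation of post-collisional momenta. -/
def collC (α β : ℝ) (p q ω : E3) : ℝ :=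
  2 * pZ α β p * pZ α β q * collE α β p q *
      mdot α β (omHat α β ω) ((pZ α β q)⁻¹ • q - (pZ α β p)⁻¹ • p) /
    (collE α β p q ^ 2 - mdot α β (omHat α β ω) (p + q) ^ 2)

/-- The post-collisional momentum `p̄′ = p̄ + C(p̄,q̄,ω)ω̂`. -/
def pPr (α β : ℝ) (p q ω : E3) : E3 := p + collC α β p q ω • omHat α β ω

/-- The post-collisional momentum `q̄′ = q̄ − C(p̄,q̄,ω)ω̂`. -/
def qPr (α β : ℝ) (p q ω : E3) : E3 := q - collC α β p q ω • omHat α β ω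

/-- The surface measure on the unit sphere `S² ⊂ ℝ³`. -/
def sphMeas : Measure (Metric.sphere (0 : E3) 1) := (volume : Measure E3).toSphere

/-- The gain term `Q⁺(f,g)`. -/
def Qplus (α β : ℝ) (S₀ : E3 → E3 → E3 → E3 → ℝ) (f g : E3 → ℝ) (p : E3) : ℝ :=
  α * β ^ 2 *
    ∫ q : E3, (pZ α β q)⁻¹ *
      ∫ ω : Metric.sphere (0 : E3) 1,
        f (pPr α β p q ω) * g (qPr α β p q ω) *
          S₀ p q (pPr α β p q ω) (qPr α β p q ω) ∂sphMeas

/-- The loss term `Q⁻(f,g)`. -/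
def Qminus (α β : ℝ) (S₀ : E3 → E3 → E3 → E3 → ℝ) (f g : E3 → ℝ) (p : E3) : ℝ :=
  α * β ^ 2 *
    ∫ q : E3, (pZ α β q)⁻¹ *
      ∫ ω : Metric.sphere (0 : E3) 1,
        f p * g q * S₀ p q (pPr α β p q ω) (qPr α β p q ω) ∂sphMeas

/-- The collision operator `Q = Q⁺ − Q⁻`. -/
def Qcoll (α β : ℝ) (S₀ : E3 → E3 → E3 → E3 → ℝ) (f g : E3 → ℝ) (p : E3) : ℝ :=
  Qplus α β S₀ f g p - Qminus α β S₀ f g p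

/-- The space `L¹(ℝ³)`. -/
abbrev L1 : Type := Lp ℝ 1 (volume : Measure E3)

/-- Membership in `X_r = {f ∈ L¹(ℝ³) : f ≥ 0 a.e., ‖f‖ ≤ r}`. -/
def memX (r : ℝ) (f : L1) : Prop := (0 ≤ᵐ[volume] ⇑f) ∧ ‖f‖ ≤ r

end

/-! ### Collisions along a line -/

/-- One-dimensional form of `collC`: the increment of the component along `ω̂` for particles of
energies `P`, `Q` whose momenta have components `s`, `t` along `ω̂`. -/
noncomputable def lineC (P Q s t : ℝ) : ℝ :=
  2 * P * Q * (P + Q) * (Q⁻¹ * t - P⁻¹ * s) / ((P + Q) ^ 2 - (s + t) ^ 2)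

/-- Twice the rapidity of the centre of mass, measured from the second particle, as a function of
the relative rapidity `u`. -/
noncomputable def comShift (A B u : ℝ) : ℝ :=
  Real.log ((A * Real.exp u + B) / (A * Real.exp (-u) + B))

lemma measurable_comShift (A B : ℝ) : Measurable (comShift A B) := by
  unfold comShift; fun_prop

/-- In rapidity coordinates `s = A sinh θ`, `t = B sinh φ` a collision along a line sends the
relative rapidity `u = θ - φ` to `-u` and translates `φ` by a function of `u`. -/
lemma collision_rapidity {A B : ℝ} (hA : 0 < A) (hB : 0 < B) (u φ : ℝ) :
    let c := lineC (A * Real.cosh (u + φ)) (B * Real.cosh φ)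
      (A * Real.sinh (u + φ)) (B * Real.sinh φ)
    A * Real.sinh (u + φ) + c = A * Real.sinh (φ + comShift A B u - u) ∧
    B * Real.sinh φ - c = B * Real.sinh (φ + comShift A B u) := by
  have hx := Real.exp_pos u
  have hy := Real.exp_pos φ
  have hH : Real.exp (comShift A B u) =
      (A * Real.exp u + B) / (A * (Real.exp u)⁻¹ + B) := by
    rw [comShift, Real.exp_log (by positivity), Real.exp_neg]
  have hden : (A * Real.cosh (u + φ) + B * Real.cosh φ) ^ 2 -
      (A * Real.sinh (u + φ) + B * Real.sinh φ) ^ 2 =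
      (A * Real.exp u + B) * (A * (Real.exp u)⁻¹ + B) := by
    simp only [Real.cosh_eq, Real.sinh_eq, Real.exp_neg, Real.exp_add]
    field_simp
    ring
  have hnum : 2 * (A * Real.cosh (u + φ)) * (B * Real.cosh φ) *
      (A * Real.cosh (u + φ) + B * Real.cosh φ) *
      ((B * Real.cosh φ)⁻¹ * (B * Real.sinh φ) -
        (A * Real.cosh (u + φ))⁻¹ * (A * Real.sinh (u + φ))) =
      - 2 * (A * B * Real.sinh u) * (A * Real.cosh (u + φ) + B * Real.cosh φ) := by
    have h1 := Real.cosh_pos (u + φ)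
    have h2 := Real.cosh_pos φ
    have h3 : Real.sinh u = Real.sinh (u + φ) * Real.cosh φ - Real.cosh (u + φ) * Real.sinh φ := by
      rw [← Real.sinh_sub]; simp
    rw [h3]
    field_simp
    ring
  simp only [lineC, hnum, hden]
  simp only [Real.cosh_eq, Real.sinh_eq, Real.exp_neg, Real.exp_add, Real.exp_sub, hH]
  constructor <;> field_simp <;> ring

lemma sqrt_rapidity {A : ℝ} (hA : 0 < A) (θ : ℝ) :
    √(A ^ 2 + (A * Real.sinh θ) ^ 2) = A * Real.cosh θ := by
  rw [show A ^ 2 + (A * Real.sinh θ) ^ 2 = (A * Real.cosh θ) ^ 2 by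
    rw [mul_pow, mul_pow, Real.cosh_sq]; ring]
  exact Real.sqrt_sq (mul_pos hA (Real.cosh_pos θ)).le

/-- The substitution `s = A sinh θ` turns `ds / √(A² + s²)` into `dθ`. -/
lemma lintegral_rapidity {A : ℝ} (hA : 0 < A) (F : ℝ → ENNReal) :
    ∫⁻ s, ENNReal.ofReal (√(A ^ 2 + s ^ 2))⁻¹ * F s = ∫⁻ θ, F (A * Real.sinh θ) := by
  have hd : ∀ x ∈ (Set.univ : Set ℝ),
      HasDerivWithinAt (fun θ => A * Real.sinh θ) (A * Real.cosh x) Set.univ x :=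
    fun x _ => ((Real.hasDerivAt_sinh x).const_mul A).hasDerivWithinAt
  have hinj : Set.InjOn (fun θ => A * Real.sinh θ) Set.univ := fun x _ y _ h =>
    Real.sinh_injective (mul_left_cancel₀ hA.ne' h)
  have himg : (fun θ => A * Real.sinh θ) '' Set.univ = Set.univ := by
    rw [Set.image_univ, Set.range_eq_univ]
    intro y
    obtain ⟨x, hx⟩ := Real.sinh_surjective (y / A)
    exact ⟨x, by simp only [hx]; field_simp⟩
  have h := lintegral_image_eq_lintegral_abs_deriv_mul MeasurableSet.univ hd hinj
    (fun s => ENNReal.ofReal (√(A ^ 2 + s ^ 2))⁻¹ * F s)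
  rw [himg, Measure.restrict_univ] at h
  rw [h]
  refine lintegral_congr fun θ => ?_
  have hc := Real.cosh_pos θ
  have hpos : 0 < A * Real.cosh θ := mul_pos hA hc
  rw [sqrt_rapidity hA, abs_of_pos hpos, ← mul_assoc, ← ENNReal.ofReal_mul hpos.le,
    mul_inv_cancel₀ hpos.ne', ENNReal.ofReal_one, one_mul]

/-- The measure `ds dt / (p⁰ q⁰)` is invariant under a collision along a line. -/
lemma line_invariance {A B : ℝ} (hA : 0 < A) (hB : 0 < B) {F : ℝ → ℝ → ENNReal}
    (hF : Measurable (Function.uncurry F)) :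
    ∫⁻ t, ∫⁻ s, ENNReal.ofReal (√(B ^ 2 + t ^ 2))⁻¹ * (ENNReal.ofReal (√(A ^ 2 + s ^ 2))⁻¹ *
      F (s + lineC √(A ^ 2 + s ^ 2) √(B ^ 2 + t ^ 2) s t)
        (t - lineC √(A ^ 2 + s ^ 2) √(B ^ 2 + t ^ 2) s t)) =
    ∫⁻ t, ∫⁻ s, ENNReal.ofReal (√(B ^ 2 + t ^ 2))⁻¹ *
      (ENNReal.ofReal (√(A ^ 2 + s ^ 2))⁻¹ * F s t) := by
  have hFc : ∀ {a b : ℝ × ℝ → ℝ}, Measurable a → Measurable b →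
      Measurable fun z => F (a z) (b z) := fun ha hb => hF.comp (ha.prodMk hb)
  simp_rw [lintegral_const_mul' _ _ ENNReal.ofReal_ne_top]
  rw [lintegral_rapidity hB, lintegral_rapidity hB]
  simp_rw [lintegral_rapidity hA, sqrt_rapidity hA, sqrt_rapidity hB]
  calc _ = ∫⁻ φ, ∫⁻ u, F (A * Real.sinh (φ + comShift A B u - u))
              (B * Real.sinh (φ + comShift A B u)) := by
        refine lintegral_congr fun φ => ?_
        rw [← lintegral_add_right_eq_self _ φ]
        refine lintegral_congr fun u => ?_
        rw [(collision_rapidity hA hB u φ).1, (collision_rapidity hA hB u φ).2]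
    _ = ∫⁻ u, ∫⁻ φ, F (A * Real.sinh (φ + comShift A B u - u))
              (B * Real.sinh (φ + comShift A B u)) := by
        refine lintegral_lintegral_swap (Measurable.aemeasurable ?_)
        have := measurable_comShift A B
        exact hFc (by fun_prop) (by fun_prop)
    _ = ∫⁻ u, ∫⁻ φ, F (A * Real.sinh (φ - u)) (B * Real.sinh φ) := by
        refine lintegral_congr fun u => ?_
        exact lintegral_add_right_eq_self
          (fun φ => F (A * Real.sinh (φ - u)) (B * Real.sinh φ)) _
    _ = ∫⁻ φ, ∫⁻ u, F (A * Real.sinh (φ - u)) (B * Real.sinh φ) := by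
        refine lintegral_lintegral_swap (Measurable.aemeasurable ?_)
        exact hFc (by fun_prop) (by fun_prop)
    _ = _ := by
        refine lintegral_congr fun φ => ?_
        exact lintegral_sub_left_eq_self (fun θ => F (A * Real.sinh θ) (B * Real.sinh φ)) φ

/-! ### Reduction of the three-dimensional collision to a line -/

/-- Coordinates adapted to a metric unit vector `w`: the first coordinate is the component along
`w`, the other two are orthonormal coordinates of the metric orthogonal complement. Lebesgue
measure is a constant multiple of the coordinate Lebesgue measure. -/
lemma exists_frame {α β : ℝ} (hα : 0 < α) (hβ : 0 < β) {w : E3} (hw : mdot α β w w = 1) :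
    ∃ (κ : ENNReal) (Φ : ℝ → (Fin 2 → ℝ) → E3),
      Measurable (Function.uncurry Φ) ∧
      (∀ s x t y, mdot α β (Φ s x) (Φ t y) = s * t + (x 0 * y 0 + x 1 * y 1)) ∧
      (∀ s x c, Φ s x + c • w = Φ (s + c) x) ∧
      (∀ s x, mdot α β w (Φ s x) = s) ∧
      κ ≠ ⊤ ∧
      ∀ F : E3 → ENNReal, Measurable F → ∫⁻ p, F p = κ * ∫⁻ x, ∫⁻ s, F (Φ s x) := by
  classical
  have hα' := hα.ne'
  have hβ' := hβ.ne'
  -- `D` rescales the axes so that `mdot` becomes the Euclidean inner product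
  let D : E3 → E3 := fun p => !₂[α * p 0, β * p 1, β * p 2]
  have hD : ∀ p q, inner ℝ (D p) (D q) = mdot α β p q := by
    intro p q
    simp [D, mdot, PiLp.inner_apply, Fin.sum_univ_three]
    ring
  let Dinv : E3 →ₗ[ℝ] E3 :=
    { toFun := fun p => !₂[α⁻¹ * p 0, β⁻¹ * p 1, β⁻¹ * p 2]
      map_add' := fun p q => by ext i; fin_cases i <;> simp [mul_add]
      map_smul' := fun c p => by ext i; fin_cases i <;> simp [mul_left_comm] }
  have hDD : ∀ p, D (Dinv p) = p := by
    intro p; ext i; fin_cases i <;> simp [D, Dinv, hα', hβ']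
  have hDD' : ∀ p, Dinv (D p) = p := by
    intro p; ext i; fin_cases i <;> simp [D, Dinv, hα', hβ']
  have hDw : ‖D w‖ = 1 := by
    have h := real_inner_self_eq_norm_sq (D w)
    rw [hD, hw] at h
    nlinarith [norm_nonneg (D w)]
  obtain ⟨b, hb⟩ : ∃ b : OrthonormalBasis (Fin 3) ℝ E3, ∀ i ∈ ({0} : Set (Fin 3)), b i = D w := by
    refine Orthonormal.exists_orthonormalBasis_extension_of_card_eq (v := fun _ => D w)
      (by simp) ?_
    constructor
    · intro i; simpa using hDw
    · rintro ⟨i, hi⟩ ⟨j, hj⟩ hij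
      simp only [Set.mem_singleton_iff] at hi hj
      subst hi hj
      exact absurd rfl hij
  have hb0 : b 0 = D w := hb 0 rfl
  let Ψ : E3 →ₗ[ℝ] E3 := Dinv ∘ₗ b.repr.symm.toLinearEquiv.toLinearMap
  have hΨ : ∀ x, Ψ x = Dinv (b.repr.symm x) := fun x => rfl
  have hΨdot : ∀ x y, mdot α β (Ψ x) (Ψ y) = inner ℝ x y := by
    intro x y
    rw [← hD, hΨ, hΨ, hDD, hDD, LinearIsometryEquiv.inner_map_map]
  have hΨw : Ψ (EuclideanSpace.single 0 1) = w := by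
    rw [hΨ, OrthonormalBasis.repr_symm_single, hb0, hDD']
  have hΨinj : Function.Injective Ψ := by
    rw [← LinearMap.ker_eq_bot, LinearMap.ker_eq_bot']
    intro x hx
    have h := hΨdot x x
    rw [hx] at h
    rw [← inner_self_eq_zero (𝕜 := ℝ), ← h]
    simp [mdot]
  have hdet : LinearMap.det Ψ ≠ 0 := by
    have := (LinearEquiv.ofInjectiveEndo Ψ hΨinj).isUnit_det'
    exact this.ne_zero
  have hΨcont : Continuous Ψ := LinearMap.continuous_of_finiteDimensional Ψ
  have hmap := Measure.map_linearMap_addHaar_eq_smul_addHaar (volume : Measure E3) hdet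
  let Φ : ℝ → (Fin 2 → ℝ) → E3 := fun s x => Ψ !₂[s, x 0, x 1]
  have he : MeasurePreserving (fun z : ℝ × (Fin 2 → ℝ) => (!₂[z.1, z.2 0, z.2 1] : E3)) := by
    have h := (PiLp.volume_preserving_toLp (Fin 3)).comp
      (volume_preserving_piFinSuccAbove (fun _ : Fin 3 => ℝ) 0).symm
    convert h using 1
    ext z i
    fin_cases i <;> rfl
  have hΦmeas : Measurable (Function.uncurry Φ) := hΨcont.measurable.comp he.measurable
  have hΦe : ∀ s x c, Φ s x + c • w = Φ (s + c) x := by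
    intro s x c
    rw [← hΨw, ← map_smul, ← map_add]
    congr 1
    ext i
    fin_cases i <;> simp
  have hdot : ∀ s x t y, mdot α β (Φ s x) (Φ t y) = s * t + (x 0 * y 0 + x 1 * y 1) := by
    intro s x t y
    rw [hΨdot]
    simp [PiLp.inner_apply, Fin.sum_univ_three]
    ring
  have hk0 : ENNReal.ofReal |(LinearMap.det Ψ)⁻¹| ≠ 0 := by
    simp [hdet]
  refine ⟨(ENNReal.ofReal |(LinearMap.det Ψ)⁻¹|)⁻¹, Φ, hΦmeas, hdot, hΦe, ?_, ?_, ?_⟩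
  · intro s x
    rw [← hΨw, hΨdot]
    simp [PiLp.inner_apply]
  · simpa using hdet
  · intro F hF
    have h1 : ∫⁻ p, F p ∂(Measure.map Ψ volume) = ∫⁻ x, ∫⁻ s, F (Φ s x) := by
      rw [lintegral_map hF hΨcont.measurable]
      refine (he.lintegral_comp (hF.comp hΨcont.measurable)).symm.trans ?_
      rw [Measure.volume_eq_prod]
      exact lintegral_prod_symm' _ ((hF.comp hΨcont.measurable).comp he.measurable)
    rw [← h1, hmap, lintegral_smul_measure, smul_eq_mul, ← mul_assoc,
      ENNReal.inv_mul_cancel hk0 ENNReal.ofReal_ne_top, one_mul]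

/-! ### Measurability and positivity -/

lemma measurable_mdot {X : Type*} [MeasurableSpace X] {α β : ℝ} {a b : X → E3}
    (ha : Measurable a) (hb : Measurable b) : Measurable fun x => mdot α β (a x) (b x) := by
  unfold mdot; fun_prop

lemma measurable_pZ {X : Type*} [MeasurableSpace X] {α β : ℝ} {a : X → E3}
    (ha : Measurable a) : Measurable fun x => pZ α β (a x) :=
  ((measurable_mdot ha ha).const_add 1).sqrt

lemma measurable_omHat {X : Type*} [MeasurableSpace X] {α β : ℝ} {a : X → E3}
    (ha : Measurable a) : Measurable fun x => omHat α β (a x) :=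
  (measurable_mdot ha ha).sqrt.inv.smul ha

lemma measurable_collC {X : Type*} [MeasurableSpace X] {α β : ℝ} {a b c : X → E3}
    (ha : Measurable a) (hb : Measurable b) (hc : Measurable c) :
    Measurable fun x => collC α β (a x) (b x) (c x) := by
  have h1 := measurable_pZ (α := α) (β := β) ha
  have h2 := measurable_pZ (α := α) (β := β) hb
  have h3 := measurable_omHat (α := α) (β := β) hc
  have h4 := measurable_mdot (α := α) (β := β) h3 ((h2.inv.smul hb).sub (h1.inv.smul ha))
  have h5 := measurable_mdot (α := α) (β := β) h3 (ha.add hb)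
  exact ((((measurable_const.mul h1).mul h2).mul (h1.add h2)).mul h4).div
    (((h1.add h2).pow_const 2).sub (h5.pow_const 2))

lemma measurable_pPr {X : Type*} [MeasurableSpace X] {α β : ℝ} {a b c : X → E3}
    (ha : Measurable a) (hb : Measurable b) (hc : Measurable c) :
    Measurable fun x => pPr α β (a x) (b x) (c x) :=
  ha.add ((measurable_collC ha hb hc).smul (measurable_omHat hc))

lemma measurable_qPr {X : Type*} [MeasurableSpace X] {α β : ℝ} {a b c : X → E3}
    (ha : Measurable a) (hb : Measurable b) (hc : Measurable c) :
    Measurable fun x => qPr α β (a x) (b x) (c x) :=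
  hb.sub ((measurable_collC ha hb hc).smul (measurable_omHat hc))

lemma one_le_pZ (α β : ℝ) (p : E3) : 1 ≤ pZ α β p := by
  unfold pZ mdot
  rw [Real.one_le_sqrt]
  nlinarith [mul_self_nonneg (α * p 0), mul_self_nonneg (β * p 1), mul_self_nonneg (β * p 2)]

lemma mdot_omHat_self {α β : ℝ} (hα : 0 < α) (hβ : 0 < β) {ω : E3} (hω : ω ≠ 0) :
    mdot α β (omHat α β ω) (omHat α β ω) = 1 := by
  have hpos : 0 < mdot α β ω ω := by
    obtain ⟨i, hi⟩ : ∃ i, ω i ≠ 0 := by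
      by_contra! h
      exact hω (by ext i; simpa using h i)
    have h0 := mul_self_nonneg (ω 0)
    have h1 := mul_self_nonneg (ω 1)
    have h2 := mul_self_nonneg (ω 2)
    have hi' := mul_self_pos.2 hi
    have ha : 0 < α ^ 2 := by positivity
    have hb : 0 < β ^ 2 := by positivity
    unfold mdot
    rw [mul_assoc]
    fin_cases i
    · have := mul_pos ha hi'
      have := mul_nonneg hb.le (add_nonneg h1 h2)
      simp only [Fin.zero_eta] at *
      linarith
    · have := mul_nonneg ha.le h0
      have := mul_pos hb (add_pos_of_pos_of_nonneg hi' h2)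
      simp only [Fin.mk_one] at *
      linarith
    · have := mul_nonneg ha.le h0
      have := mul_pos hb (add_pos_of_nonneg_of_pos h1 hi')
      simp only [Fin.reduceFinMk] at *
      linarith
  have hs := Real.sqrt_pos.2 hpos
  have hsq := Real.mul_self_sqrt hpos.le
  have : mdot α β (omHat α β ω) (omHat α β ω) =
      (√(mdot α β ω ω))⁻¹ * (√(mdot α β ω ω))⁻¹ * mdot α β ω ω := by
    unfold omHat
    generalize (√(mdot α β ω ω))⁻¹ = r
    simp [mdot]
    ring
  rw [this]
  nth_rewrite 3 [← hsq]
  field_simp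

/-! ### Invariance of `dp̄ dq̄ / (p⁰ q⁰)` -/

/-- For each fixed collision direction the measure `dp̄ dq̄ / (p⁰ q⁰)` is invariant under
`(p̄, q̄) ↦ (p̄′, q̄′)`. -/
lemma collision_invariance {α β : ℝ} (hα : 0 < α) (hβ : 0 < β) {ω : E3} (hω : ω ≠ 0)
    {F : E3 → E3 → ENNReal} (hF : Measurable (Function.uncurry F)) :
    ∫⁻ p, ∫⁻ q, ENNReal.ofReal (pZ α β q)⁻¹ * (ENNReal.ofReal (pZ α β p)⁻¹ *
      F (pPr α β p q ω) (qPr α β p q ω)) =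
    ∫⁻ p, ∫⁻ q, ENNReal.ofReal (pZ α β q)⁻¹ * (ENNReal.ofReal (pZ α β p)⁻¹ * F p q) := by
  obtain ⟨κ, Φ, hΦm, hdot, hshift, hwdot, hκ, hIntg⟩ :=
    exists_frame hα hβ (mdot_omHat_self hα hβ hω)
  have key : ∀ {G : E3 → E3 → ENNReal}, Measurable (Function.uncurry G) →
      ∫⁻ p, ∫⁻ q, G p q =
        κ * (κ * ∫⁻ x, ∫⁻ y, ∫⁻ t, ∫⁻ s, G (Φ s x) (Φ t y)) := by
    intro G hG
    have hm : ∀ x, Measurable fun s => Φ s x := fun x =>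
      hΦm.comp (measurable_id.prodMk measurable_const)
    have h1 : ∀ p, ∫⁻ q, G p q = κ * ∫⁻ y, ∫⁻ t, G p (Φ t y) := fun p =>
      hIntg _ (hG.comp (measurable_const.prodMk measurable_id))
    rw [hIntg (fun p => ∫⁻ q, G p q) hG.lintegral_prod_right']
    simp only [h1, lintegral_const_mul' _ _ hκ]
    congr 3
    ext x
    have hmG : Measurable fun z : (ℝ × (Fin 2 → ℝ)) × ℝ => G (Φ z.1.1 x) (Φ z.2 z.1.2) :=
      hG.comp (((hm x).comp (by fun_prop)).prodMk
        (hΦm.comp ((measurable_snd).prodMk (measurable_snd.comp measurable_fst))))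
    rw [lintegral_lintegral_swap (Measurable.aemeasurable hmG.lintegral_prod_right')]
    refine lintegral_congr fun y => ?_
    refine lintegral_lintegral_swap (Measurable.aemeasurable ?_)
    exact hG.comp (((hm x).comp measurable_fst).prodMk ((hm y).comp measurable_snd))
  have hw : ∀ {H : E3 → E3 → ENNReal}, Measurable (Function.uncurry H) →
      Measurable (Function.uncurry fun p q => ENNReal.ofReal (pZ α β q)⁻¹ *
        (ENNReal.ofReal (pZ α β p)⁻¹ * H p q)) := by
    intro H hH
    exact (measurable_pZ measurable_snd).inv.ennreal_ofReal.mul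
      ((measurable_pZ measurable_fst).inv.ennreal_ofReal.mul hH)
  rw [key (hw (H := fun p q => F (pPr α β p q ω) (qPr α β p q ω))
      (hF.comp ((measurable_pPr measurable_fst measurable_snd measurable_const).prodMk
        (measurable_qPr measurable_fst measurable_snd measurable_const)))),
    key (hw hF)]
  congr 3
  ext x
  congr 1
  ext y
  have hpos : ∀ x : Fin 2 → ℝ, 0 < 1 + (x 0 * x 0 + x 1 * x 1) := fun x => by
    nlinarith [mul_self_nonneg (x 0), mul_self_nonneg (x 1)]
  have hpZ : ∀ s x, pZ α β (Φ s x) = √(√(1 + (x 0 * x 0 + x 1 * x 1)) ^ 2 + s ^ 2) := by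
    intro s x
    rw [pZ, hdot, Real.sq_sqrt (hpos x).le]
    congr 1
    ring
  have hC : ∀ s t, collC α β (Φ s x) (Φ t y) ω =
      lineC (pZ α β (Φ s x)) (pZ α β (Φ t y)) s t := by
    intro s t
    have hlin : ∀ (w p q : E3) (a b : ℝ),
        mdot α β w (a • p - b • q) = a * mdot α β w p - b * mdot α β w q := by
      intro w p q a b
      simp [mdot]
      ring
    have hadd : ∀ (w p q : E3), mdot α β w (p + q) = mdot α β w p + mdot α β w q := by
      intro w p q
      simp [mdot]
      ring
    rw [collC, lineC, collE, hlin, hadd, hwdot, hwdot]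
  have hp : ∀ s t, pPr α β (Φ s x) (Φ t y) ω =
      Φ (s + lineC (pZ α β (Φ s x)) (pZ α β (Φ t y)) s t) x := by
    intro s t
    rw [pPr, hC, hshift]
  have hq : ∀ s t, qPr α β (Φ s x) (Φ t y) ω =
      Φ (t - lineC (pZ α β (Φ s x)) (pZ α β (Φ t y)) s t) y := by
    intro s t
    rw [qPr, hC, sub_eq_add_neg, ← neg_smul, hshift, sub_eq_add_neg]
  simp only [hp, hq, hpZ]
  refine line_invariance (Real.sqrt_pos.2 (hpos x)) (Real.sqrt_pos.2 (hpos y))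
    (F := fun s t => F (Φ s x) (Φ t y)) ?_
  exact hF.comp ((hΦm.comp (measurable_fst.prodMk measurable_const)).prodMk
    (hΦm.comp (measurable_snd.prodMk measurable_const)))

/-! ### Gain and loss kernels -/

instance : IsFiniteMeasure sphMeas :=
  inferInstanceAs (IsFiniteMeasure (volume : Measure E3).toSphere)

lemma sphMeas_univ : sphMeas Set.univ = ENNReal.ofReal (4 * Real.pi) := by
  rw [sphMeas, Measure.toSphere_apply_univ, EuclideanSpace.volume_ball_fin_three,
    finrank_euclideanSpace_fin, ← ENNReal.ofReal_pow zero_le_one,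
    ← ENNReal.ofReal_mul (by positivity), ← ENNReal.ofReal_natCast, ← ENNReal.ofReal_mul (by positivity)]
  congr 1
  push_cast
  ring

/-- Integrand of `(1/p⁰) Q⁺(f,g)` as a function of `(p̄, (q̄, ω))`, without the factor `αβ²`. -/
noncomputable def gainK (α β : ℝ) (S₀ : E3 → E3 → E3 → E3 → ℝ) (f g : E3 → ℝ)
    (z : E3 × E3 × Metric.sphere (0 : E3) 1) : ℝ :=
  (pZ α β z.1)⁻¹ * ((pZ α β z.2.1)⁻¹ *
    (f (pPr α β z.1 z.2.1 z.2.2) * g (qPr α β z.1 z.2.1 z.2.2) *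
      S₀ z.1 z.2.1 (pPr α β z.1 z.2.1 z.2.2) (qPr α β z.1 z.2.1 z.2.2)))

/-- Integrand of `(1/p⁰) Q⁻(f,g)` as a function of `(p̄, (q̄, ω))`, without the factor `αβ²`. -/
noncomputable def lossK (α β : ℝ) (S₀ : E3 → E3 → E3 → E3 → ℝ) (f g : E3 → ℝ)
    (z : E3 × E3 × Metric.sphere (0 : E3) 1) : ℝ :=
  (pZ α β z.1)⁻¹ * ((pZ α β z.2.1)⁻¹ *
    (f z.1 * g z.2.1 *
      S₀ z.1 z.2.1 (pPr α β z.1 z.2.1 z.2.2) (qPr α β z.1 z.2.1 z.2.2)))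

/-- The measure `dp̄ dq̄ dω`. -/
noncomputable abbrev collMeas : Measure (E3 × E3 × Metric.sphere (0 : E3) 1) :=
  (volume : Measure E3).prod ((volume : Measure E3).prod sphMeas)

section Bounds

variable {C₁ α β : ℝ} {S₀ : E3 → E3 → E3 → E3 → ℝ}

lemma measurable_collZ :
    Measurable (fun z : E3 × E3 × Metric.sphere (0 : E3) 1 => pPr α β z.1 z.2.1 z.2.2) ∧
    Measurable (fun z : E3 × E3 × Metric.sphere (0 : E3) 1 => qPr α β z.1 z.2.1 z.2.2) := by
  have h1 : Measurable fun z : E3 × E3 × Metric.sphere (0 : E3) 1 => z.1 := measurable_fst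
  have h2 : Measurable fun z : E3 × E3 × Metric.sphere (0 : E3) 1 => z.2.1 :=
    measurable_fst.comp measurable_snd
  have h3 : Measurable fun z : E3 × E3 × Metric.sphere (0 : E3) 1 => (z.2.2 : E3) :=
    measurable_subtype_coe.comp (measurable_snd.comp measurable_snd)
  exact ⟨measurable_pPr h1 h2 h3, measurable_qPr h1 h2 h3⟩

lemma measurable_S₀Z
    (hS : Measurable fun x : (E3 × E3) × E3 × E3 => S₀ x.1.1 x.1.2 x.2.1 x.2.2) :
    Measurable fun z : E3 × E3 × Metric.sphere (0 : E3) 1 =>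
      S₀ z.1 z.2.1 (pPr α β z.1 z.2.1 z.2.2) (qPr α β z.1 z.2.1 z.2.2) :=
  hS.comp ((measurable_fst.prodMk (measurable_fst.comp measurable_snd)).prodMk
    (measurable_collZ.1.prodMk measurable_collZ.2))

lemma measurable_weightZ {k : E3 × E3 × Metric.sphere (0 : E3) 1 → ℝ} (hk : Measurable k) :
    Measurable fun z => (pZ α β z.1)⁻¹ * ((pZ α β z.2.1)⁻¹ * k z) :=
  (measurable_pZ measurable_fst).inv.mul
    ((measurable_pZ (measurable_fst.comp measurable_snd)).inv.mul hk)

lemma measurable_gainK {f g : E3 → ℝ}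
    (hS : Measurable fun x : (E3 × E3) × E3 × E3 => S₀ x.1.1 x.1.2 x.2.1 x.2.2)
    (hf : Measurable f) (hg : Measurable g) : Measurable (gainK α β S₀ f g) :=
  measurable_weightZ (((hf.comp measurable_collZ.1).mul (hg.comp measurable_collZ.2)).mul
    (measurable_S₀Z hS))

lemma measurable_lossK {f g : E3 → ℝ}
    (hS : Measurable fun x : (E3 × E3) × E3 × E3 => S₀ x.1.1 x.1.2 x.2.1 x.2.2)
    (hf : Measurable f) (hg : Measurable g) : Measurable (lossK α β S₀ f g) :=
  measurable_weightZ (((hf.comp measurable_fst).mul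
    (hg.comp (measurable_fst.comp measurable_snd))).mul (measurable_S₀Z hS))

lemma inv_pZ_nonneg (p : E3) : 0 ≤ (pZ α β p)⁻¹ :=
  inv_nonneg.2 (zero_le_one.trans (one_le_pZ α β p))

lemma inv_pZ_le_one (p : E3) : ENNReal.ofReal (pZ α β p)⁻¹ ≤ 1 := by
  rw [ENNReal.ofReal_le_one]
  exact inv_le_one_of_one_le₀ (one_le_pZ α β p)

lemma enorm_kernel_le {a b S : ℝ} (hS0 : 0 ≤ S) (hS1 : S ≤ C₁) (p q : E3) :
    ‖(pZ α β p)⁻¹ * ((pZ α β q)⁻¹ * (a * b * S))‖ₑ ≤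
      ENNReal.ofReal C₁ * (ENNReal.ofReal (pZ α β q)⁻¹ * (ENNReal.ofReal (pZ α β p)⁻¹ *
        (‖a‖ₑ * ‖b‖ₑ))) := by
  simp only [enorm_mul]
  rw [Real.enorm_of_nonneg hS0, Real.enorm_of_nonneg (inv_pZ_nonneg p),
    Real.enorm_of_nonneg (inv_pZ_nonneg q)]
  calc _ = ENNReal.ofReal S * (ENNReal.ofReal (pZ α β q)⁻¹ * (ENNReal.ofReal (pZ α β p)⁻¹ *
        (‖a‖ₑ * ‖b‖ₑ))) := by ring
    _ ≤ _ := by gcongr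

/-- Common estimate for the gain and loss kernels: `k` is dominated by `C₁ H`, where for each `ω`
the `(p̄, q̄)`-integral of `H` is that of `|f| ⊗ |g|` against `dp̄ dq̄ / (p⁰ q⁰)`. Since `p⁰, q⁰ ≥ 1`
and `S²` has area `4π`, the `L¹` norm of `k` is at most `4πC₁ ‖f‖ ‖g‖`. -/
lemma kernel_bound {f g : E3 → ℝ} (hC₁ : 0 < C₁) (hf : Measurable f) (hg : Measurable g)
    (hfi : Integrable f) (hgi : Integrable g)
    {k : E3 × E3 × Metric.sphere (0 : E3) 1 → ℝ} (hk : Measurable k)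
    {H : E3 × E3 × Metric.sphere (0 : E3) 1 → ENNReal} (hH : Measurable H)
    (hkH : ∀ z, ‖k z‖ₑ ≤ ENNReal.ofReal C₁ * H z)
    (hinv : ∀ ω, ∫⁻ p, ∫⁻ q, H (p, q, ω) =
      ∫⁻ p, ∫⁻ q, ENNReal.ofReal (pZ α β q)⁻¹ * (ENNReal.ofReal (pZ α β p)⁻¹ *
        (‖f p‖ₑ * ‖g q‖ₑ))) :
    Integrable k collMeas ∧
      ∫ z, |k z| ∂collMeas ≤ 4 * Real.pi * C₁ * (∫ p, |f p|) * (∫ p, |g p|) := by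
  have h1 : ∀ ω, ∫⁻ p, ∫⁻ q, H (p, q, ω) ≤ (∫⁻ p, ‖f p‖ₑ) * ∫⁻ q, ‖g q‖ₑ := by
    intro ω
    rw [hinv]
    calc _ ≤ ∫⁻ p, ∫⁻ q, ‖f p‖ₑ * ‖g q‖ₑ := by
          refine lintegral_mono fun p => lintegral_mono fun q => ?_
          calc _ ≤ 1 * (1 * (‖f p‖ₑ * ‖g q‖ₑ)) := by
                gcongr
                · exact inv_pZ_le_one q
                · exact inv_pZ_le_one p
            _ = _ := by rw [one_mul, one_mul]
      _ = _ := lintegral_lintegral_mul hf.enorm.aemeasurable hg.enorm.aemeasurable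
  have h2 : ∫⁻ z, H z ∂collMeas = ∫⁻ ω, (∫⁻ p, ∫⁻ q, H (p, q, ω)) ∂sphMeas := by
    rw [lintegral_prod _ hH.aemeasurable]
    have h3 : ∀ p, ∫⁻ y, H (p, y) ∂((volume : Measure E3).prod sphMeas) =
        ∫⁻ ω, (∫⁻ q, H (p, q, ω)) ∂sphMeas := fun p =>
      lintegral_prod_symm' _ (hH.comp (measurable_const.prodMk measurable_id))
    simp_rw [h3]
    refine lintegral_lintegral_swap (Measurable.aemeasurable ?_)
    have : Measurable fun y : (E3 × Metric.sphere (0 : E3) 1) × E3 => H (y.1.1, y.2, y.1.2) :=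
      hH.comp (by fun_prop)
    exact this.lintegral_prod_right'
  have hb : ∫⁻ z, ‖k z‖ₑ ∂collMeas ≤
      ENNReal.ofReal (4 * Real.pi * C₁ * (∫ p, |f p|) * (∫ p, |g p|)) := by
    calc _ ≤ ∫⁻ z, ENNReal.ofReal C₁ * H z ∂collMeas := lintegral_mono hkH
      _ = ENNReal.ofReal C₁ * ∫⁻ ω, (∫⁻ p, ∫⁻ q, H (p, q, ω)) ∂sphMeas := by
          rw [lintegral_const_mul _ hH, h2]
      _ ≤ ENNReal.ofReal C₁ * ∫⁻ _, ((∫⁻ p, ‖f p‖ₑ) * ∫⁻ q, ‖g q‖ₑ) ∂sphMeas := by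
          gcongr with ω
          exact h1 ω
      _ = _ := by
          have e1 : ∀ {h : E3 → ℝ}, Integrable h → ∫⁻ p, ‖h p‖ₑ = ENNReal.ofReal (∫ p, |h p|) :=
            fun hi => (ofReal_integral_norm_eq_lintegral_enorm hi).symm
          have p1 : 0 ≤ ∫ p, |f p| := integral_nonneg fun _ => abs_nonneg _
          have p2 : 0 ≤ ∫ p, |g p| := integral_nonneg fun _ => abs_nonneg _
          have := Real.pi_pos
          rw [lintegral_const, sphMeas_univ, e1 hfi, e1 hgi, ← ENNReal.ofReal_mul p1,
            ← ENNReal.ofReal_mul (by positivity), ← ENNReal.ofReal_mul hC₁.le]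
          congr 1
          ring
  have hki : Integrable k collMeas :=
    ⟨hk.aestronglyMeasurable, hb.trans_lt ENNReal.ofReal_lt_top⟩
  refine ⟨hki, ?_⟩
  have p1 : 0 ≤ ∫ p, |f p| := integral_nonneg fun _ => abs_nonneg _
  have p2 : 0 ≤ ∫ p, |g p| := integral_nonneg fun _ => abs_nonneg _
  have := Real.pi_pos
  rw [← ENNReal.ofReal_le_ofReal_iff (by positivity)]
  exact (ofReal_integral_norm_eq_lintegral_enorm hki).trans_le hb

/-- The change of variables `(p̄, q̄) ↦ (p̄′, q̄′)` removes the primes from the gain kernel. -/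
lemma gainK_bound {f g : E3 → ℝ} (hα : 0 < α) (hβ : 0 < β) (hC₁ : 0 < C₁)
    (hS : Measurable fun x : (E3 × E3) × E3 × E3 => S₀ x.1.1 x.1.2 x.2.1 x.2.2)
    (hS0 : ∀ p q p' q', 0 ≤ S₀ p q p' q') (hS1 : ∀ p q p' q', S₀ p q p' q' ≤ C₁)
    (hf : Measurable f) (hg : Measurable g) (hfi : Integrable f) (hgi : Integrable g) :
    Integrable (gainK α β S₀ f g) collMeas ∧ ∫ z, |gainK α β S₀ f g z| ∂collMeas ≤
      4 * Real.pi * C₁ * (∫ p, |f p|) * (∫ p, |g p|) := by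
  refine kernel_bound (α := α) (β := β) hC₁ hf hg hfi hgi (measurable_gainK hS hf hg)
    (H := fun z => ENNReal.ofReal (pZ α β z.2.1)⁻¹ * (ENNReal.ofReal (pZ α β z.1)⁻¹ *
      (‖f (pPr α β z.1 z.2.1 z.2.2)‖ₑ * ‖g (qPr α β z.1 z.2.1 z.2.2)‖ₑ))) ?_
    (fun z => enorm_kernel_le (hS0 _ _ _ _) (hS1 _ _ _ _) _ _) fun ω => ?_
  · exact (measurable_pZ (measurable_fst.comp measurable_snd)).inv.ennreal_ofReal.mul
      ((measurable_pZ measurable_fst).inv.ennreal_ofReal.mul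
        ((hf.comp measurable_collZ.1).enorm.mul (hg.comp measurable_collZ.2).enorm))
  · exact collision_invariance hα hβ (ne_zero_of_mem_unit_sphere ω)
      (F := fun p q => ‖f p‖ₑ * ‖g q‖ₑ)
      ((hf.comp measurable_fst).enorm.mul (hg.comp measurable_snd).enorm)

lemma lossK_bound {f g : E3 → ℝ} (hC₁ : 0 < C₁)
    (hS : Measurable fun x : (E3 × E3) × E3 × E3 => S₀ x.1.1 x.1.2 x.2.1 x.2.2)
    (hS0 : ∀ p q p' q', 0 ≤ S₀ p q p' q') (hS1 : ∀ p q p' q', S₀ p q p' q' ≤ C₁)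
    (hf : Measurable f) (hg : Measurable g) (hfi : Integrable f) (hgi : Integrable g) :
    Integrable (lossK α β S₀ f g) collMeas ∧ ∫ z, |lossK α β S₀ f g z| ∂collMeas ≤
      4 * Real.pi * C₁ * (∫ p, |f p|) * (∫ p, |g p|) := by
  refine kernel_bound (α := α) (β := β) hC₁ hf hg hfi hgi (measurable_lossK hS hf hg)
    (H := fun z => ENNReal.ofReal (pZ α β z.2.1)⁻¹ * (ENNReal.ofReal (pZ α β z.1)⁻¹ *
      (‖f z.1‖ₑ * ‖g z.2.1‖ₑ))) ?_
    (fun z => enorm_kernel_le (hS0 _ _ _ _) (hS1 _ _ _ _) _ _) fun ω => rfl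
  exact (measurable_pZ (measurable_fst.comp measurable_snd)).inv.ennreal_ofReal.mul
    ((measurable_pZ measurable_fst).inv.ennreal_ofReal.mul
      ((hf.comp measurable_fst).enorm.mul (hg.comp (measurable_fst.comp measurable_snd)).enorm))

/-- Integrability in `(q̄, ω)` allows the iterated integral defining `Q⁺` to be read as an integral
over the product; likewise for `Q⁻` below. -/
lemma Qplus_eq {f g : E3 → ℝ} {p : E3}
    (h : Integrable (fun y => gainK α β S₀ f g (p, y)) ((volume : Measure E3).prod sphMeas)) :
    (pZ α β p)⁻¹ * Qplus α β S₀ f g p =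
      α * β ^ 2 * ∫ y, gainK α β S₀ f g (p, y) ∂((volume : Measure E3).prod sphMeas) := by
  rw [integral_prod _ h]
  simp only [gainK, integral_const_mul, Qplus]
  ring

lemma Qminus_eq {f g : E3 → ℝ} {p : E3}
    (h : Integrable (fun y => lossK α β S₀ f g (p, y)) ((volume : Measure E3).prod sphMeas)) :
    (pZ α β p)⁻¹ * Qminus α β S₀ f g p =
      α * β ^ 2 * ∫ y, lossK α β S₀ f g (p, y) ∂((volume : Measure E3).prod sphMeas) := by
  rw [integral_prod _ h]
  simp only [lossK, integral_const_mul, Qminus]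
  ring

end Bounds

theorem statement_4
    (C₀ C₁ α β : ℝ) (hC₀ : 0 < C₀) (hC₁ : 0 < C₁) (hα : C₀ ≤ α) (hβ : C₀ ≤ β)
    (S₀ : E3 → E3 → E3 → E3 → ℝ)
    (hS₀meas : Measurable fun x : (E3 × E3) × E3 × E3 => S₀ x.1.1 x.1.2 x.2.1 x.2.2)
    (hS₀nonneg : ∀ p q p' q', 0 ≤ S₀ p q p' q')
    (hS₀bdd : ∀ p q p' q', S₀ p q p' q' ≤ C₁)
    (hS₀symm : ∀ p q p' q', S₀ p q p' q' = S₀ p' q' p q)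
    (f g : L1) :
    ∫ p : E3, |(pZ α β p)⁻¹ * Qcoll α β S₀ (⇑f) (⇑f) p -
        (pZ α β p)⁻¹ * Qcoll α β S₀ (⇑g) (⇑g) p| ≤
      2 * (4 * Real.pi * C₁ * α * β ^ 2) * (‖f‖ + ‖g‖) * ‖f - g‖ := by
  have hα0 : 0 < α := hC₀.trans_le hα
  have hβ0 : 0 < β := hC₀.trans_le hβ
  have hf : Measurable (⇑f) := (Lp.stronglyMeasurable f).measurable
  have hg : Measurable (⇑g) := (Lp.stronglyMeasurable g).measurable
  have hfi : Integrable (⇑f) := L1.integrable_coeFn f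
  have hgi : Integrable (⇑g) := L1.integrable_coeFn g
  set d : E3 → ℝ := fun x => f x - g x with hd_def
  have hd : Measurable d := hf.sub hg
  have hdi : Integrable d := hfi.sub hgi
  have nf : ∫ p, |f p| = ‖f‖ := (L1.norm_eq_integral_norm f).symm
  have ng : ∫ p, |g p| = ‖g‖ := (L1.norm_eq_integral_norm g).symm
  have nd : ∫ p, |d p| = ‖f - g‖ := by
    rw [L1.norm_eq_integral_norm]
    refine integral_congr_ae ?_
    filter_upwards [Lp.coeFn_sub f g] with x hx
    rw [hx, Pi.sub_apply, Real.norm_eq_abs]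
  have G : ∀ {u v : E3 → ℝ}, Measurable u → Measurable v → Integrable u → Integrable v → _ :=
    fun hu hv hui hvi => gainK_bound hα0 hβ0 hC₁ hS₀meas hS₀nonneg hS₀bdd hu hv hui hvi
  have L : ∀ {u v : E3 → ℝ}, Measurable u → Measurable v → Integrable u → Integrable v → _ :=
    fun hu hv hui hvi => lossK_bound (α := α) (β := β) hC₁ hS₀meas hS₀nonneg hS₀bdd hu hv hui hvi
  obtain ⟨i1, b1⟩ := G hf hd hfi hdi
  obtain ⟨i2, b2⟩ := G hd hg hdi hgi
  obtain ⟨i3, b3⟩ := L hf hd hfi hdi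
  obtain ⟨i4, b4⟩ := L hd hg hdi hgi
  rw [nf, nd] at b1 b3
  rw [ng, nd] at b2 b4
  -- the kernel of the difference, by bilinearity and `f ⊗ f - g ⊗ g = f ⊗ d + d ⊗ g`
  let k : E3 × E3 × Metric.sphere (0 : E3) 1 → ℝ := fun z =>
    (gainK α β S₀ f d z + gainK α β S₀ d g z) - (lossK α β S₀ f d z + lossK α β S₀ d g z)
  have hki : Integrable k collMeas := (i1.add i2).sub (i3.add i4)
  have hkeq : ∀ z, k z = (gainK α β S₀ f f z - lossK α β S₀ f f z) -
      (gainK α β S₀ g g z - lossK α β S₀ g g z) := by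
    intro z
    simp only [k, gainK, lossK, hd_def]
    ring
  have hkb : ∫ z, |k z| ∂collMeas ≤ 2 * (4 * Real.pi * C₁) * (‖f‖ + ‖g‖) * ‖f - g‖ := by
    calc _ ≤ ∫ z, ((|gainK α β S₀ f d z| + |gainK α β S₀ d g z|) +
            (|lossK α β S₀ f d z| + |lossK α β S₀ d g z|)) ∂collMeas := by
          refine integral_mono hki.abs ((i1.abs.add i2.abs).add (i3.abs.add i4.abs)) fun z => ?_
          exact (abs_sub _ _).trans (add_le_add (abs_add_le _ _) (abs_add_le _ _))
      _ = ((∫ z, |gainK α β S₀ f d z| ∂collMeas) + ∫ z, |gainK α β S₀ d g z| ∂collMeas) +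
            ((∫ z, |lossK α β S₀ f d z| ∂collMeas) + ∫ z, |lossK α β S₀ d g z| ∂collMeas) := by
          rw [← integral_add i1.abs i2.abs, ← integral_add i3.abs i4.abs]
          exact integral_add (i1.abs.add i2.abs) (i3.abs.add i4.abs)
      _ ≤ _ := by linarith
  have hQ : ∀ᵐ p : E3, |(pZ α β p)⁻¹ * Qcoll α β S₀ (⇑f) (⇑f) p -
        (pZ α β p)⁻¹ * Qcoll α β S₀ (⇑g) (⇑g) p| ≤
      α * β ^ 2 * ∫ y, |k (p, y)| ∂((volume : Measure E3).prod sphMeas) := by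
    filter_upwards [(G hf hf hfi hfi).1.prod_right_ae, (G hg hg hgi hgi).1.prod_right_ae,
      (L hf hf hfi hfi).1.prod_right_ae, (L hg hg hgi hgi).1.prod_right_ae] with p h1 h2 h3 h4
    have e : (pZ α β p)⁻¹ * Qcoll α β S₀ (⇑f) (⇑f) p - (pZ α β p)⁻¹ * Qcoll α β S₀ (⇑g) (⇑g) p =
        α * β ^ 2 * ∫ y, k (p, y) ∂((volume : Measure E3).prod sphMeas) := by
      simp_rw [hkeq]
      simp only [Qcoll, mul_sub]
      rw [Qplus_eq h1, Qplus_eq h2, Qminus_eq h3, Qminus_eq h4, ← mul_sub, ← mul_sub, ← mul_sub,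
        ← integral_sub h1 h3, ← integral_sub h2 h4]
      exact congrArg _ (integral_sub (h1.sub h3) (h2.sub h4)).symm
    rw [e, abs_mul, abs_of_pos (by positivity : 0 < α * β ^ 2)]
    gcongr
    exact abs_integral_le_integral_abs
  have hIntg : Integrable fun p : E3 =>
      α * β ^ 2 * ∫ y, |k (p, y)| ∂((volume : Measure E3).prod sphMeas) :=
    hki.abs.integral_prod_left.const_mul _
  calc _ ≤ ∫ p : E3, α * β ^ 2 * ∫ y, |k (p, y)| ∂((volume : Measure E3).prod sphMeas) :=
        integral_mono_of_nonneg (Filter.Eventually.of_forall fun _ => abs_nonneg _) hIntg hQ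
    _ = α * β ^ 2 * ∫ z, |k z| ∂collMeas := by
        rw [integral_const_mul, integral_prod _ hki.abs]
    _ ≤ α * β ^ 2 * (2 * (4 * Real.pi * C₁) * (‖f‖ + ‖g‖) * ‖f - g‖) := by gcongr
    _ = _ := by ring
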